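/- arXiv:1305.1503 — 2 statements merged into one kernel-verified Lean document; each statement's English description precedes it below -/
import Mathlib

section
/- Let R be a commutative ring, let {f_j}_{j ∈ J} be a family of elements of R, and let g ∈ R. Then Loc(R_g) ∩ Loc({R_{f_j} : j ∈ J}) = Loc({R_{g f_j} : j ∈ J}) in D(R). -/
open CategoryTheory CategoryTheory.Limits CategoryTheory.Pretriangulated ZeroObject

universe w w' v u

section TriangulatedDefs

variable {T : Type u} [Category.{v} T] [Preadditive T] [HasZeroObject T]
  [HasShift T ℤ] [∀ n : ℤ, (shiftFunctor T n).Additive] [Pretriangulated T]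

/-- A localizing subcategory of a (pre)triangulated category, encoded as a set of
objects: it is closed under isomorphisms, contains the zero object, is stable
under shifts, closed under cones of distinguished triangles (hence a full
triangulated subcategory), and closed under arbitrary small coproducts
(phrased via colimit cofans, so that no global existence of coproducts
is needed). -/
structure IsLocalizingSub (S : Set T) : Prop where
  zero_mem : (0 : T) ∈ S
  mem_of_iso : ∀ {x y : T}, (x ≅ y) → x ∈ S → y ∈ S
  shift_mem : ∀ (n : ℤ) {x : T}, x ∈ S → x⟦n⟧ ∈ S
  cone_mem : ∀ (Tr : Triangle T), Tr ∈ distinguishedTriangles →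
    Tr.obj₁ ∈ S → Tr.obj₂ ∈ S → Tr.obj₃ ∈ S
  coprod_mem : ∀ {ι : Type w} (f : ι → T) (c : Cofan f), IsColimit c →
    (∀ i, f i ∈ S) → c.pt ∈ S

/-- A colocalizing subcategory: as `IsLocalizingSub` but with products instead
of coproducts. -/
structure IsColocalizingSub (S : Set T) : Prop where
  zero_mem : (0 : T) ∈ S
  mem_of_iso : ∀ {x y : T}, (x ≅ y) → x ∈ S → y ∈ S
  shift_mem : ∀ (n : ℤ) {x : T}, x ∈ S → x⟦n⟧ ∈ S
  cone_mem : ∀ (Tr : Triangle T), Tr ∈ distinguishedTriangles →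
    Tr.obj₁ ∈ S → Tr.obj₂ ∈ S → Tr.obj₃ ∈ S
  prod_mem : ∀ {ι : Type w} (f : ι → T) (c : Fan f), IsLimit c →
    (∀ i, f i ∈ S) → c.pt ∈ S

/-- `Loc S`: the smallest localizing subcategory containing the set of
objects `S` (the intersection of all localizing subcategories containing it). -/
def Loc (S : Set T) : Set T :=
  ⋂₀ {L : Set T | IsLocalizingSub.{w} L ∧ S ⊆ L}

/-- The right orthogonal of a set of objects. -/
def rightOrth (C : Set T) : Set T :=
  {x : T | ∀ ⦃c : T⦄, c ∈ C → ∀ (g : c ⟶ x), g = 0}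

end TriangulatedDefs

section CompactDefs

variable {T : Type u} [Category.{v} T] [Preadditive T]

/-- The canonical comparison map `⨁ᵢ Hom(x, fᵢ) →+ Hom(x, ∐ f)` associated to a
cofan `c` on a family `f`. -/
noncomputable def cofanHomComparison {ι : Type w} (x : T) (f : ι → T) (c : Cofan f) :
    (Π₀ i, (x ⟶ f i)) →+ (x ⟶ c.pt) :=
  letI := Classical.decEq ι
  DFinsupp.sumAddHom (fun i => AddMonoidHom.mk' (fun φ => φ ≫ c.inj i)
    (fun φ ψ => Preadditive.add_comp _ _ _ φ ψ (c.inj i)))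

/-- An object `x` is compact if `Hom(x, -)` commutes with arbitrary small
coproducts, i.e. for every colimit cofan on a family `f`, the canonical map
`⨁ᵢ Hom(x, fᵢ) → Hom(x, ∐ f)` is bijective. -/
def IsCompactObj (x : T) : Prop :=
  ∀ ⦃ι : Type w⦄ (f : ι → T) (c : Cofan f), IsColimit c →
    Function.Bijective (cofanHomComparison x f c)

end CompactDefs

section DR

variable (R : Type u) [CommRing R] [HasDerivedCategory.{w'} (ModuleCat.{u} R)]

/-- The `R`-module `M`, regarded as an object of the derived category `D(R)`,
as a complex concentrated in degree `0`. -/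
noncomputable def smod (M : ModuleCat.{u} R) : DerivedCategory (ModuleCat.{u} R) :=
  (DerivedCategory.singleFunctor (ModuleCat.{u} R) 0).obj M

end DR


set_option linter.unusedSectionVars false

section CoprodQ

variable {C : Type u} [Category.{v} C] [Abelian C] {J : Type w}
  [HasColimitsOfShape (Discrete J) C] [HasExactColimitsOfShape (Discrete J) C]

/-- The family of complexes as a complex of families. -/
noncomputable def famCx (K : J → CochainComplex C ℤ) : CochainComplex (Discrete J ⥤ C) ℤ where
  X n := Discrete.functor (fun i => (K i).X n)
  d n m := Discrete.natTrans (fun i => (K i.as).d n m)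
  shape n m h := by
    ext ⟨i⟩
    simpa using (K i).shape n m h
  d_comp_d' n m k _ _ := by
    ext ⟨i⟩
    simp

noncomputable def famMap {K L : J → CochainComplex C ℤ} (φ : ∀ i, K i ⟶ L i) :
    famCx K ⟶ famCx L where
  f n := Discrete.natTrans (fun i => (φ i.as).f n)
  comm' n m _ := by
    ext ⟨i⟩
    simp [famCx]

lemma famMap_quasiIso {K L : J → CochainComplex C ℤ} (φ : ∀ i, K i ⟶ L i)
    (h : ∀ i, QuasiIso (φ i)) : QuasiIso (famMap φ) := by
  rw [quasiIso_iff]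
  intro n
  rw [quasiIsoAt_iff_isIso_homologyMap]
  rw [NatTrans.isIso_iff_isIso_app]
  intro i
  obtain ⟨i⟩ := i
  have h1 := ShortComplex.mapHomologyIso_hom_naturality
    ((HomologicalComplex.shortComplexFunctor _ _ n).map (famMap φ))
    ((evaluation (Discrete J) C).obj ⟨i⟩)
  have h2 : IsIso (HomologicalComplex.homologyMap (φ i) n) := inferInstance
  have h3 : IsIso (((evaluation (Discrete J) C).obj ⟨i⟩).map
      (ShortComplex.homologyMap
        ((HomologicalComplex.shortComplexFunctor _ _ n).map (famMap φ)))) := by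
    have h4 := (Iso.eq_inv_comp _).2 h1.symm
    rw [h4]
    have h5 : IsIso (@ShortComplex.homologyMap _ _ _
      (((HomologicalComplex.shortComplexFunctor _ _ n).obj (famCx K)).map
        ((evaluation (Discrete J) C).obj ⟨i⟩))
      (((HomologicalComplex.shortComplexFunctor _ _ n).obj (famCx L)).map
        ((evaluation (Discrete J) C).obj ⟨i⟩))
      (((evaluation (Discrete J) C).obj ⟨i⟩).mapShortComplex.map
        ((HomologicalComplex.shortComplexFunctor _ _ n).map (famMap φ))) _ _) := h2
    infer_instance
  exact h3

noncomputable def bigP (K : J → CochainComplex C ℤ) : CochainComplex C ℤ :=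
  ((colim (J := Discrete J) (C := C)).mapHomologicalComplex _).obj (famCx K)

noncomputable def bigPι (K : J → CochainComplex C ℤ) (i : J) : K i ⟶ bigP K where
  f n := colimit.ι (Discrete.functor (fun i => (K i).X n)) ⟨i⟩
  comm' n m _ := by
    exact ι_colimMap ((famCx K).d n m) ⟨i⟩

noncomputable def bigPcofan (K : J → CochainComplex C ℤ) : Cofan K := Cofan.mk (bigP K) (bigPι K)

noncomputable def bigPcolim (K : J → CochainComplex C ℤ) : IsColimit (bigPcofan K) :=
  HomologicalComplex.isColimitOfEval _ _ (fun n =>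
    (isColimitMapCoconeCofanMkEquiv (HomologicalComplex.eval C _ n) K (bigPι K)).symm
      (IsColimit.ofIsoColimit (colimit.isColimit (Discrete.functor (fun i => (K i).X n)))
        (Cofan.ext (Iso.refl _) (fun _ => Category.comp_id _))))

noncomputable def bigPdesc {K : J → CochainComplex C ℤ} {Y : CochainComplex C ℤ}
    (b : ∀ i, K i ⟶ Y) : bigP K ⟶ Y := Cofan.IsColimit.desc (bigPcolim K) b

lemma bigPι_desc {K : J → CochainComplex C ℤ} {Y : CochainComplex C ℤ}
    (b : ∀ i, K i ⟶ Y) (i : J) : bigPι K i ≫ bigPdesc b = b i :=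
  Cofan.IsColimit.fac (bigPcolim K) b i

lemma bigP_hom_ext {K : J → CochainComplex C ℤ} {Y : CochainComplex C ℤ}
    {a b : bigP K ⟶ Y} (h : ∀ i, bigPι K i ≫ a = bigPι K i ≫ b) : a = b :=
  Cofan.IsColimit.hom_ext (bigPcolim K) _ _ h

noncomputable def bigPmap {K L : J → CochainComplex C ℤ} (φ : ∀ i, K i ⟶ L i) :
    bigP K ⟶ bigP L :=
  ((colim (J := Discrete J) (C := C)).mapHomologicalComplex _).map (famMap φ)

lemma bigPι_map {K L : J → CochainComplex C ℤ} (φ : ∀ i, K i ⟶ L i) (i : J) :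
    bigPι K i ≫ bigPmap φ = φ i ≫ bigPι L i := by
  ext n
  exact ι_colimMap ((famMap φ).f n) ⟨i⟩

lemma bigPι_map_assoc {K L : J → CochainComplex C ℤ} (φ : ∀ i, K i ⟶ L i) (i : J)
    {Z : CochainComplex C ℤ} (h : bigP L ⟶ Z) :
    bigPι K i ≫ bigPmap φ ≫ h = φ i ≫ bigPι L i ≫ h := by
  rw [← Category.assoc, bigPι_map, Category.assoc]

lemma bigPmap_quasiIso {K L : J → CochainComplex C ℤ} (φ : ∀ i, K i ⟶ L i)
    (h : ∀ i, QuasiIso (φ i)) : QuasiIso (bigPmap φ) := by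
  have := famMap_quasiIso φ h
  have : PreservesFiniteColimits (colim (J := Discrete J) (C := C)) := inferInstance
  have : (colim (J := Discrete J) (C := C)).Additive := inferInstance
  have : (colim (J := Discrete J) (C := C)).PreservesHomology := inferInstance
  exact HomologicalComplex.quasiIso_map_of_preservesHomology (famMap φ) (colim (J := Discrete J) (C := C))

variable [HasDerivedCategory.{w'} C]

open DerivedCategory

lemma Q_zero_factor {X Y : CochainComplex C ℤ} (h : X ⟶ Y) (hh : Q.map h = 0) :
    ∃ (X' A : CochainComplex C ℤ) (s : X' ⟶ X) (a : X' ⟶ A) (b : A ⟶ Y), QuasiIso s ∧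
      QuasiIso (0 : A ⟶ A) ∧ s ≫ h = a ≫ b := by
  have h1 : Qh.map ((HomotopyCategory.quotient _ _).map h) =
      Qh.map ((HomotopyCategory.quotient _ _).map 0) := by
    have e := (quotientCompQhIso C).hom.naturality h
    rw [hh, comp_zero, Preadditive.IsIso.comp_right_eq_zero] at e
    simpa using e
  rw [MorphismProperty.map_eq_iff_precomp Qh (HomotopyCategory.quasiIso C _)] at h1
  obtain ⟨X', s, hs, e⟩ := h1
  obtain ⟨X', rfl⟩ := HomotopyCategory.quotient_obj_surjective X'
  obtain ⟨s, rfl⟩ := (HomotopyCategory.quotient _ _).map_surjective s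
  rw [← Functor.map_comp, ← Functor.map_comp, comp_zero] at e
  have H := HomotopyCategory.homotopyOfEq _ _ e
  refine ⟨X', CochainComplex.mappingCone (𝟙 X'), s, CochainComplex.mappingCone.inr _,
    HomologicalComplex.homotopyCofiber.desc _ (s ≫ h) ((Homotopy.ofEq (by simp)).trans H),
    ?_, ?_, ?_⟩
  · exact (HomotopyCategory.quotient_map_mem_quasiIso_iff s).1 hs
  · rw [← isIso_Q_map_iff_quasiIso,
      ← Q_map_eq_of_homotopy _ (CochainComplex.mappingCone.homotopyToZeroOfId X')]
    infer_instance
  · exact (HomologicalComplex.homotopyCofiber.inr_desc _ _ _).symm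

lemma bigP_uniq {K : J → CochainComplex C ℤ} {Y : DerivedCategory C} (f : Q.obj (bigP K) ⟶ Y)
    (hf : ∀ i, Q.map (bigPι K i) ≫ f = 0) : f = 0 := by
  obtain ⟨Y', ⟨e⟩⟩ : ∃ Y', Nonempty (Q.obj Y' ≅ Y) := ⟨_, ⟨Q.objObjPreimageIso Y⟩⟩
  obtain ⟨Y'', g, t, ht, fac⟩ := left_fac (f ≫ e.inv)
  have hg : ∀ i, Q.map (bigPι K i ≫ g) = 0 := fun i => by
    have : Q.map g = f ≫ e.inv ≫ Q.map t := by
      rw [← Category.assoc, fac, Category.assoc, IsIso.inv_hom_id, Category.comp_id]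
    rw [Functor.map_comp, this, reassoc_of% (hf i), zero_comp]
  choose X' A s a b hs hA hfac using fun i => Q_zero_factor _ (hg i)
  have hs' := bigPmap_quasiIso s hs
  have hA' := bigPmap_quasiIso (fun i => (0 : A i ⟶ A i)) hA
  have hz : bigPmap (fun i => (0 : A i ⟶ A i)) = 0 :=
    bigP_hom_ext (fun i => by rw [bigPι_map, zero_comp, comp_zero])
  have hzero : IsZero (Q.obj (bigP A)) := by
    rw [hz, ← isIso_Q_map_iff_quasiIso, Functor.map_zero] at hA'
    rw [IsZero.iff_id_eq_zero, ← IsIso.hom_inv_id (0 : Q.obj (bigP A) ⟶ Q.obj (bigP A)), zero_comp]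
  have hfin : bigPmap s ≫ g = bigPmap a ≫ bigPdesc b :=
    bigP_hom_ext (fun i => by rw [bigPι_map_assoc, bigPι_map_assoc, bigPι_desc, hfac])
  have hg0 : Q.map g = 0 := by
    rw [← cancel_epi (Q.map (bigPmap s)), comp_zero, ← Functor.map_comp, hfin, Functor.map_comp,
      hzero.eq_of_tgt (Q.map (bigPmap a)) 0, zero_comp]
  rw [hg0, zero_comp] at fac
  rw [← cancel_mono e.inv, fac, zero_comp]

lemma bigP_exists {K : J → CochainComplex C ℤ} {Y : DerivedCategory C} (f : ∀ i, Q.obj (K i) ⟶ Y) :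
    ∃ F : Q.obj (bigP K) ⟶ Y, ∀ i, Q.map (bigPι K i) ≫ F = f i := by
  obtain ⟨Y', ⟨e⟩⟩ : ∃ Y', Nonempty (Q.obj Y' ≅ Y) := ⟨_, ⟨Q.objObjPreimageIso Y⟩⟩
  choose X' s hs g fac using fun i => right_fac (f i ≫ e.inv)
  have hs' := bigPmap_quasiIso s (fun i => by
    rw [← isIso_Q_map_iff_quasiIso]; exact hs i)
  refine ⟨inv (Q.map (bigPmap s)) ≫ Q.map (bigPdesc g) ≫ e.hom,
    fun i => ?_⟩
  have h1 : bigPι X' i ≫ bigPdesc g = g i :=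
    bigPι_desc g i
  have h2 : Q.map (bigPι K i) ≫ inv (Q.map (bigPmap s)) = inv (Q.map (s i)) ≫ Q.map (bigPι X' i) := by
    rw [IsIso.comp_inv_eq, Category.assoc, ← Functor.map_comp, bigPι_map, Functor.map_comp,
      IsIso.inv_hom_id_assoc]
  rw [reassoc_of% h2, ← Functor.map_comp_assoc, h1, ← Category.assoc, ← fac, Category.assoc,
    e.inv_hom_id, Category.comp_id]

noncomputable def bigPQcolim (K : J → CochainComplex C ℤ) :
    IsColimit (Cofan.mk (f := fun i => Q.obj (K i)) (Q.obj (bigP K))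
      (fun i => Q.map (bigPι K i)) : Cofan (fun i => (Q.obj (K i) : DerivedCategory C))) :=
  Cofan.IsColimit.mk _ (fun s => (bigP_exists s.inj).choose)
    (fun s i => (bigP_exists s.inj).choose_spec i)
    (fun s m hm => by
      rw [← sub_eq_zero]
      refine bigP_uniq _ (fun i => ?_)
      rw [Preadditive.comp_sub, (bigP_exists s.inj).choose_spec i, sub_eq_zero]
      exact hm i)

lemma Q_preserves : PreservesColimitsOfShape (Discrete J) (Q : _ ⥤ DerivedCategory C) := by
  have h (K : J → CochainComplex C ℤ) : PreservesColimit (Discrete.functor K)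
      (Q : _ ⥤ DerivedCategory C) :=
    preservesColimit_of_preserves_colimit_cocone (bigPcolim K)
      ((isColimitMapCoconeCofanMkEquiv _ _ _).symm (bigPQcolim K))
  exact preservesColimitsOfShape_of_discrete _

end CoprodQ


section Part2

section LocGen
variable {T : Type u} [Category.{v} T] [Preadditive T] [HasZeroObject T]
  [HasShift T ℤ] [∀ n : ℤ, (shiftFunctor T n).Additive] [Pretriangulated T]

lemma loc_isLocalizing (S : Set T) : IsLocalizingSub.{w} (Loc.{w} S) where
  zero_mem := fun _ hL => hL.1.zero_mem
  mem_of_iso := fun e hx L hL => hL.1.mem_of_iso e (hx L hL)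
  shift_mem := fun n _ hx L hL => hL.1.shift_mem n (hx L hL)
  cone_mem := fun Tr h h1 h2 L hL => hL.1.cone_mem Tr h (h1 L hL) (h2 L hL)
  coprod_mem := fun f c hc h L hL => hL.1.coprod_mem f c hc (fun i => h i L hL)

lemma subset_loc (S : Set T) : S ⊆ Loc.{w} S := fun _ hx _ hL => hL.2 hx

lemma loc_subset {S L : Set T} (hL : IsLocalizingSub.{w} L) (h : S ⊆ L) : Loc.{w} S ⊆ L :=
  fun _ hx => hx L ⟨hL, h⟩

/-- objects on which g is invertible -/
lemma local_isLocalizing (R : Type w') [CommRing R] [Linear R T]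
    [∀ n : ℤ, (shiftFunctor T n).Linear R] (g : R) :
    IsLocalizingSub.{w} {X : T | IsIso (g • 𝟙 X)} where
  zero_mem := (isZero_zero T).isoZero.isIso_hom.casesOn (fun _ => ⟨0, by
    constructor <;> exact (isZero_zero T).eq_of_src _ _⟩)
  mem_of_iso := fun {x y} e hx => by
    have hx : IsIso (g • 𝟙 x) := hx
    have : g • 𝟙 y = e.inv ≫ (g • 𝟙 x) ≫ e.hom := by simp
    show IsIso (g • 𝟙 y)
    rw [this]; infer_instance
  shift_mem := fun n x hx => by
    have hx : IsIso (g • 𝟙 x) := hx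
    show IsIso (g • 𝟙 (x⟦n⟧))
    have : g • 𝟙 (x⟦n⟧) = (shiftFunctor T n).map (g • 𝟙 x) := by
      rw [Functor.map_smul, CategoryTheory.Functor.map_id]
    rw [this]; infer_instance
  cone_mem := fun Tr h h1 h2 => by
    let φ : Tr ⟶ Tr :=
      { hom₁ := g • 𝟙 _
        hom₂ := g • 𝟙 _
        hom₃ := g • 𝟙 _
        comm₁ := by simp
        comm₂ := by simp
        comm₃ := by simp [Functor.map_smul] }
    exact isIso₃_of_isIso₁₂ φ h h h1 h2
  coprod_mem := fun f c hc h => by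
    have h : ∀ i, IsIso (g • 𝟙 (f i)) := h
    refine ⟨Cofan.IsColimit.desc hc (fun i => inv (g • 𝟙 (f i)) ≫ c.inj i), ?_, ?_⟩
    · refine Cofan.IsColimit.hom_ext hc _ _ (fun i => ?_)
      have : (g • 𝟙 (f i)) ≫ inv (g • 𝟙 (f i)) ≫ c.inj i = c.inj i := by
        rw [IsIso.hom_inv_id_assoc]
      rw [Linear.smul_comp, Category.id_comp] at this
      simpa using this
    · refine Cofan.IsColimit.hom_ext hc _ _ (fun i => ?_)
      have : (g • 𝟙 (f i)) ≫ inv (g • 𝟙 (f i)) ≫ c.inj i = c.inj i := by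
        rw [IsIso.hom_inv_id_assoc]
      rw [Linear.smul_comp, Category.id_comp] at this
      simpa using this

end LocGen

section Mod

variable {R : Type u} [CommRing R]

/-- finsupp cofan -/
noncomputable def finsuppColim (M : Type u) [AddCommGroup M] [Module R M] :
    IsColimit (Cofan.mk (f := fun _ : ULift.{u} ℕ => ModuleCat.of R M) (ModuleCat.of R (ℕ →₀ M))
      (fun j => ModuleCat.ofHom (Finsupp.lsingle j.down))) :=
  Cofan.IsColimit.mk _ (fun s => ModuleCat.ofHom (Finsupp.lsum ℕ (fun j => (s.inj ⟨j⟩).hom)))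
    (fun s j => by
      ext x
      simp [Cofan.inj])
    (fun s m hm => by
      ext : 1
      refine Finsupp.lhom_ext (fun j x => ?_)
      have := congrArg (fun f => f.hom x) (hm ⟨j⟩)
      simpa [Cofan.inj] using this)

section Tel

variable {M N : Type u} [AddCommGroup M] [Module R M] [AddCommGroup N] [Module R N]

variable (M) in
/-- telescope differential -/
noncomputable def tel (f : R) : (ℕ →₀ M) →ₗ[R] (ℕ →₀ M) :=
  Finsupp.lsum ℕ (fun j => Finsupp.lsingle j - f • Finsupp.lsingle (j + 1))

lemma tel_single (f : R) (n : ℕ) (m : M) :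
    tel M f (Finsupp.single n m) = Finsupp.single n m - Finsupp.single (n + 1) (f • m) := by
  simp [tel]

noncomputable def telp (φ : M →ₗ[R] N) (v : N →ₗ[R] N) : (ℕ →₀ M) →ₗ[R] N :=
  Finsupp.lsum ℕ (fun j => (v ^ j).comp φ)

lemma telp_single (φ : M →ₗ[R] N) (v : N →ₗ[R] N) (n : ℕ) (m : M) :
    telp φ v (Finsupp.single n m) = (v ^ n) (φ m) := by
  simp [telp]

lemma tel_zero (f : R) (x : ℕ →₀ M) : tel M f x 0 = x 0 := by
  induction x using Finsupp.induction_linear with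
  | zero => simp
  | add x y hx hy => simp [hx, hy]
  | single n m => simp [tel_single]

lemma tel_succ (f : R) (x : ℕ →₀ M) (k : ℕ) : tel M f x (k + 1) = x (k + 1) - f • x k := by
  induction x using Finsupp.induction_linear with
  | zero => simp
  | add x y hx hy => simp [hx, hy]; abel
  | single n m => simp [tel_single, Finsupp.single_apply]

lemma tel_inj (f : R) : Function.Injective (tel M f) := by
  rw [injective_iff_map_eq_zero]
  intro x hx
  ext k
  induction k with
  | zero => rw [← tel_zero f, hx]
  | succ k ih =>
    have := tel_succ f x k
    rw [hx, ih] at this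
    simpa using this.symm

lemma tel_shift (f : R) (n k : ℕ) (m : M) :
    Finsupp.single n m - Finsupp.single (n + k) (f ^ k • m) ∈ LinearMap.range (tel M f) := by
  induction k with
  | zero => simp
  | succ k ih =>
    have h2 : tel M f (Finsupp.single (n + k) (f ^ k • m)) ∈ LinearMap.range (tel M f) := ⟨_, rfl⟩
    have := add_mem ih h2
    rw [tel_single, sub_add_sub_cancel, smul_smul, ← pow_succ'] at this
    exact this

lemma tel_single_rep (f : R) (x : ℕ →₀ M) :
    ∃ n m, x - Finsupp.single n m ∈ LinearMap.range (tel M f) := by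
  induction x using Finsupp.induction_linear with
  | zero => exact ⟨0, 0, by simp⟩
  | single n m => exact ⟨n, m, by simp⟩
  | add x y hx hy =>
    obtain ⟨n, m, h⟩ := hx
    obtain ⟨n', m', h'⟩ := hy
    refine ⟨n + n', f ^ n' • m + f ^ n • m', ?_⟩
    have h1 := add_mem h (tel_shift f n n' m)
    have h2 := add_mem h' (tel_shift f n' n m')
    have := add_mem h1 h2
    rw [sub_add_sub_cancel, sub_add_sub_cancel, add_comm n' n] at this
    rw [Finsupp.single_add]
    convert this using 1
    abel

lemma telp_tel (f : R) (φ : M →ₗ[R] N) (v : N →ₗ[R] N) (hv : ∀ x, f • v x = x) :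
    (telp φ v).comp (tel M f) = 0 := by
  refine Finsupp.lhom_ext (fun n m => ?_)
  have h : v (f • φ m) = φ m := by rw [map_smul, hv]
  simp only [LinearMap.comp_apply, tel_single, map_sub, telp_single, map_smul, pow_succ,
    Module.End.mul_apply, LinearMap.zero_apply]
  rw [← map_smul, ← map_smul, h, sub_self]

lemma tel_exact (f : R) (φ : M →ₗ[R] N) (v : N →ₗ[R] N) (hv : ∀ x, f • v x = x)
    (hk : ∀ m, φ m = 0 → ∃ k : ℕ, f ^ k • m = 0) : Function.Exact (tel M f) (telp φ v) := by
  intro x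
  constructor
  · intro hx
    obtain ⟨n, m, y, hy⟩ := tel_single_rep f x
    have h0 : telp φ v (tel M f y) = 0 := LinearMap.congr_fun (telp_tel f φ v hv) y
    rw [hy, map_sub, hx, telp_single, zero_sub, neg_eq_zero] at h0
    have hinj : ∀ n : ℕ, ∀ x, (v ^ n) x = 0 → x = 0 := by
      intro n
      induction n with
      | zero => simp
      | succ n ih =>
        intro x hx
        rw [pow_succ, Module.End.mul_apply] at hx
        rw [← hv x, ih _ hx, smul_zero]
    obtain ⟨k, hk⟩ := hk m (hinj n _ h0)
    have := tel_shift f n k m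
    rw [hk, Finsupp.single_zero, sub_zero] at this
    obtain ⟨z, hz⟩ := this
    exact ⟨y + z, by rw [map_add, hy, hz, sub_add_cancel]⟩
  · rintro ⟨y, rfl⟩
    exact LinearMap.congr_fun (telp_tel f φ v hv) y

lemma tel_shortExact (f : R) (φ : M →ₗ[R] N) [hφ : IsLocalizedModule (Submonoid.powers f) φ] :
    ∃ p : (ℕ →₀ M) →ₗ[R] N, Function.Surjective p ∧ Function.Exact (tel M f) p := by
  obtain ⟨v, hv⟩ := (IsLocalizedModule.map_units φ ⟨f, Submonoid.mem_powers f⟩).exists_right_inv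
  have hv' : ∀ x, f • v x = x := fun x => by simpa using LinearMap.congr_fun hv x
  refine ⟨telp φ v, ?_, tel_exact f φ v hv' ?_⟩
  · intro y
    obtain ⟨⟨m, ⟨_, n, rfl⟩⟩, h0⟩ := IsLocalizedModule.surj (Submonoid.powers f) φ y
    refine ⟨Finsupp.single n m, ?_⟩
    have h : f ^ n • y = φ m := h0
    rw [telp_single, ← h]
    clear h h0
    induction n generalizing y with
    | zero => simp
    | succ n ih =>
      rw [pow_succ, pow_succ, Module.End.mul_apply, mul_comm, mul_smul, map_smul, hv', ih]
  · intro m hm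
    obtain ⟨⟨_, k, rfl⟩, h⟩ := (IsLocalizedModule.eq_zero_iff (Submonoid.powers f) φ).1 hm
    exact ⟨k, h⟩

end Tel

end Mod
end Part2


section Part3
section Alg
variable {R : Type u} [CommRing R]

lemma exists_locMap (a b c : R) (h : a * b = c) :
    ∃ φ : Localization.Away a →ₗ[R] Localization.Away c,
      IsLocalizedModule (Submonoid.powers b) φ := by
  subst h
  let S := Localization.Away a
  let T := Localization.Away (algebraMap R S b)
  have h1 : IsLocalization.Away (a * b) T := IsLocalization.Away.mul' S T a b
  let e : T ≃ₐ[R] Localization.Away (a * b) := IsLocalization.algEquiv (Submonoid.powers (a * b)) _ _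
  have h2 : IsLocalizedModule (Submonoid.powers b) (IsScalarTower.toAlgHom R S T).toLinearMap := by
    rw [isLocalizedModule_iff_isLocalization]
    have : Algebra.algebraMapSubmonoid S (Submonoid.powers b) =
      Submonoid.powers (algebraMap R S b) := by
      simp [Algebra.algebraMapSubmonoid, Submonoid.map_powers]
    rw [this]
    infer_instance
  exact ⟨e.toLinearEquiv.toLinearMap ∘ₗ (IsScalarTower.toAlgHom R S T).toLinearMap,
    IsLocalizedModule.of_linearEquiv _ _ _⟩

lemma mk_isLoc (g : R) (M : Type u) [AddCommGroup M] [Module R M] :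
    IsLocalizedModule (Submonoid.powers g) (TensorProduct.mk R (Localization.Away g) M 1) :=
  (isLocalizedModule_iff_isBaseChange (Submonoid.powers g) (Localization.Away g) _).2
    (TensorProduct.isBaseChange R M (Localization.Away g))

lemma exists_tensorEquiv (g f : R) : Nonempty
    (TensorProduct R (Localization.Away g) (Localization.Away f) ≃ₗ[R] Localization.Away (g * f)) := by
  obtain ⟨φ, hφ⟩ := exists_locMap f g (g * f) (mul_comm _ _)
  have := mk_isLoc g (Localization.Away f)
  exact ⟨IsLocalizedModule.linearEquiv (Submonoid.powers g)
    (TensorProduct.mk R (Localization.Away g) (Localization.Away f) 1) φ⟩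

lemma mk_bijective (g : R) (M : Type u) [AddCommGroup M] [Module R M]
    (h : IsUnit (algebraMap R (Module.End R M) g)) :
    Function.Bijective (TensorProduct.mk R (Localization.Away g) M 1) := by
  have := mk_isLoc g M
  have hid : IsLocalizedModule (Submonoid.powers g) (LinearMap.id : M →ₗ[R] M) := by
    refine ⟨?_, fun y => ⟨(y, 1), by simp⟩, fun h => ⟨1, by simpa using h⟩⟩
    rintro ⟨_, n, rfl⟩
    simpa using h.pow n
  let e := IsLocalizedModule.linearEquiv (Submonoid.powers g) (LinearMap.id : M →ₗ[R] M)
    (TensorProduct.mk R (Localization.Away g) M 1)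
  have : ⇑(TensorProduct.mk R (Localization.Away g) M 1) = e := by
    ext x
    exact (IsLocalizedModule.linearEquiv_apply (Submonoid.powers g) (LinearMap.id : M →ₗ[R] M)
    (TensorProduct.mk R (Localization.Away g) M 1) x).symm
  rw [this]
  exact e.bijective
end Alg

section Der
variable {R : Type u} [CommRing R] [HasDerivedCategory.{w'} (ModuleCat.{u} R)]

lemma single_preserves (J : Type u) : PreservesColimitsOfShape (Discrete J)
    (DerivedCategory.singleFunctor (ModuleCat.{u} R) 0) := by
  have := Q_preserves (C := ModuleCat.{u} R) (J := J)
  have : PreservesColimitsOfShape (Discrete J) (CochainComplex.singleFunctor (ModuleCat.{u} R) 0) :=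
    inferInstanceAs (PreservesColimitsOfShape (Discrete J)
      (HomologicalComplex.single (ModuleCat.{u} R) (ComplexShape.up ℤ) 0))
  exact preservesColimitsOfShape_of_natIso (DerivedCategory.singleFunctorIsoCompQ (ModuleCat.{u} R) 0).symm

lemma smod_loc_mem {L : Set (DerivedCategory (ModuleCat.{u} R))} (hL : IsLocalizingSub.{u} L)
    {M N : Type u} [AddCommGroup M] [Module R M] [AddCommGroup N] [Module R N]
    (f : R) (φ : M →ₗ[R] N) (hφ : IsLocalizedModule (Submonoid.powers f) φ)
    (hM : smod R (ModuleCat.of R M) ∈ L) : smod R (ModuleCat.of R N) ∈ L := by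
  have hfin : smod R (ModuleCat.of R (ℕ →₀ M)) ∈ L := by
    have := single_preserves (R := R) (ULift.{u} ℕ)
    have hc := isColimitCofanMkObjOfIsColimit (DerivedCategory.singleFunctor (ModuleCat.{u} R) 0) _ _
      (finsuppColim (R := R) M)
    exact hL.coprod_mem _ _ hc (fun _ => hM)
  obtain ⟨p, hp, hex⟩ := tel_shortExact f φ
  let S : ShortComplex (ModuleCat.{u} R) := ShortComplex.mk (ModuleCat.ofHom (tel M f))
    (ModuleCat.ofHom p) (by ext1; exact hex.linearMap_comp_eq_zero)
  have hS : S.ShortExact :=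
    { exact := (ShortComplex.ShortExact.moduleCat_exact_iff_function_exact S).2 hex
      mono_f := (ModuleCat.mono_iff_injective _).2 (tel_inj f)
      epi_g := (ModuleCat.epi_iff_surjective _).2 hp }
  exact hL.cone_mem _ hS.singleTriangle_distinguished hfin hfin

end Der
end Part3


section Part4

section Gen
variable {A : Type u} [Category.{v} A] [Abelian A] [HasDerivedCategory.{w'} A]

open DerivedCategory

variable {J : Type w} [HasColimitsOfShape (Discrete J) A]
    [HasExactColimitsOfShape (Discrete J) A]

lemma mapDer_preserves (F : A ⥤ A) [F.Additive] [PreservesFiniteLimits F]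
    [PreservesFiniteColimits F] [PreservesColimitsOfShape (Discrete J) F] :
    PreservesColimitsOfShape (Discrete J) F.mapDerivedCategory := by
  have hQ := Q_preserves (C := A) (J := J)
  have hF : PreservesColimitsOfShape (Discrete J)
      (F.mapHomologicalComplex (ComplexShape.up ℤ)) := by
    refine HomologicalComplex.preservesColimitsOfShape_of_eval _ (fun i => ?_)
    exact inferInstanceAs (PreservesColimitsOfShape (Discrete J)
      (HomologicalComplex.eval A (ComplexShape.up ℤ) i ⋙ F))
  have hQL : PreservesColimitsOfShape (Discrete J) (Q ⋙ F.mapDerivedCategory) :=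
    preservesColimitsOfShape_of_natIso F.mapDerivedCategoryFactors.symm
  have h (K : J → DerivedCategory A) : PreservesColimit (Discrete.functor K)
      F.mapDerivedCategory := by
    let K' : J → CochainComplex A ℤ := fun j => Q.objPreimage (K j)
    have e : Discrete.functor K' ⋙ Q ≅ Discrete.functor K :=
      Discrete.natIso (fun j => Q.objObjPreimageIso (K j.as))
    have : PreservesColimit (Discrete.functor K' ⋙ Q) F.mapDerivedCategory :=
      preservesColimit_of_preserves_colimit_cocone
        (isColimitOfPreserves Q (colimit.isColimit (Discrete.functor K')))
        (isColimitOfPreserves (Q ⋙ F.mapDerivedCategory) (colimit.isColimit (Discrete.functor K')))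
    exact preservesColimit_of_iso_diagram _ e
  exact preservesColimitsOfShape_of_discrete _

end Gen

section Pre
variable {T : Type u} [Category.{v} T] [Preadditive T] [HasZeroObject T]
  [HasShift T ℤ] [∀ n : ℤ, (shiftFunctor T n).Additive] [Pretriangulated T]

lemma preimage_isLocalizing (L : T ⥤ T) [L.CommShift ℤ] [L.IsTriangulated]
    (hL : ∀ J : Type w, PreservesColimitsOfShape (Discrete J) L)
    {S : Set T} (hS : IsLocalizingSub.{w} S) : IsLocalizingSub.{w} {X | L.obj X ∈ S} where
  zero_mem := hS.mem_of_iso L.mapZeroObject.symm hS.zero_mem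
  mem_of_iso := fun e hx => hS.mem_of_iso (L.mapIso e) hx
  shift_mem := fun n x hx => hS.mem_of_iso ((L.commShiftIso n).app x).symm (hS.shift_mem n hx)
  cone_mem := fun Tr h h1 h2 => hS.cone_mem _ (L.map_distinguished Tr h) h1 h2
  coprod_mem := fun {ι} f c hc h => by
    have := hL ι
    have hc' := isColimitOfPreserves L hc
    have hc2 := (IsColimit.precomposeHomEquiv (Discrete.natIso (fun j => Iso.refl _) :
      Discrete.functor (fun i => L.obj (f i)) ≅ Discrete.functor f ⋙ L) _).symm hc'
    exact hS.coprod_mem (fun i => L.obj (f i)) _ hc2 h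

end Pre

section LG
variable {R : Type u} [CommRing R] (g : R)
open MonoidalCategory

/-- tensoring -/
noncomputable abbrev FG : ModuleCat.{u} R ⥤ ModuleCat.{u} R :=
  tensorLeft (ModuleCat.of R (Localization.Away g))

instance : Module.Flat R (ModuleCat.of R (Localization.Away g)) :=
  inferInstanceAs (Module.Flat R (Localization.Away g))

instance : (FG g).Additive := inferInstance
instance : PreservesFiniteLimits (FG g) := inferInstance
instance : PreservesFiniteColimits (FG g) := inferInstance

/-- unit -/
noncomputable def etaG : 𝟭 (ModuleCat.{u} R) ⟶ FG g where
  app M := ModuleCat.ofHom (TensorProduct.mk R (Localization.Away g) M 1)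
  naturality M N f := by
    ext x
    rfl

lemma etaG_isIso (M : ModuleCat.{u} R) (h : IsIso (g • 𝟙 M)) : IsIso ((etaG g).app M) := by
  have hb := mk_bijective g M (by
    rw [Module.End.isUnit_iff]
    have := (ConcreteCategory.isIso_iff_bijective (g • 𝟙 M)).1 h
    exact this)
  exact (ConcreteCategory.isIso_iff_bijective _).2 hb

variable [HasDerivedCategory.{w'} (ModuleCat.{u} R)]
open DerivedCategory

lemma iso_LG (X : DerivedCategory (ModuleCat.{u} R)) (h : IsIso (g • 𝟙 X)) :
    Nonempty (X ≅ (FG g).mapDerivedCategory.obj X) := by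
  let K := Q.objPreimage X
  let e : Q.obj K ≅ X := Q.objObjPreimageIso X
  have hK : QuasiIso (g • 𝟙 K) := by
    rw [← isIso_Q_map_iff_quasiIso, Functor.map_smul, CategoryTheory.Functor.map_id]
    have : g • 𝟙 (Q.obj K) = e.hom ≫ (g • 𝟙 X) ≫ e.inv := by simp
    rw [this]; infer_instance
  let φ := (NatTrans.mapHomologicalComplex (etaG g) (ComplexShape.up ℤ)).app K
  have hφ : QuasiIso φ := by
    refine ⟨fun n => ?_⟩
    rw [quasiIsoAt_iff_isIso_homologyMap]
    have h1 : IsIso (g • 𝟙 (K.homology n)) := by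
      have h2 := (quasiIsoAt_iff_isIso_homologyMap (g • 𝟙 K) n).1 inferInstance
      have h3 : HomologicalComplex.homologyMap (g • 𝟙 K) n = g • 𝟙 (K.homology n) := by
        have h4 := ShortComplex.homologyMap_smul (𝟙 (K.sc n)) g
        rw [ShortComplex.homologyMap_id] at h4
        exact h4
      rwa [h3] at h2
    have h5 := etaG_isIso g _ h1
    have h6 := ShortComplex.homologyMap_mapNatTrans (K.sc n) (etaG g)
    have h7 : IsIso (ShortComplex.homologyMap ((K.sc n).mapNatTrans (etaG g))) := by
      have : IsIso ((etaG g).app (K.sc n).homology) := h5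
      rw [h6]; infer_instance
    exact h7
  have hφ' : IsIso (Q.map φ) := by
    rw [isIso_Q_map_iff_quasiIso]; exact hφ
  exact ⟨e.symm ≪≫ Q.mapIso ((Functor.mapHomologicalComplexIdIso _ _).symm.app K) ≪≫
    asIso (Q.map φ) ≪≫ ((FG g).mapDerivedCategoryFactors.app K).symm ≪≫
    (FG g).mapDerivedCategory.mapIso e⟩

lemma LG_single (f : R) :
    Nonempty ((FG g).mapDerivedCategory.obj (smod R (ModuleCat.of R (Localization.Away f))) ≅
      smod R (ModuleCat.of R (Localization.Away (g * f)))) := by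
  obtain ⟨e⟩ := exists_tensorEquiv g f
  exact ⟨((FG g).mapDerivedCategorySingleFunctor 0).app _ ≪≫
    (singleFunctor _ 0).mapIso (LinearEquiv.toModuleIso e)⟩

lemma smod_local : IsIso (g • 𝟙 (smod R (ModuleCat.of R (Localization.Away g)))) := by
  have h : IsIso (g • 𝟙 (ModuleCat.of R (Localization.Away g))) := by
    refine (ConcreteCategory.isIso_iff_bijective _).2 ?_
    have := IsLocalizedModule.map_units (S := Submonoid.powers g)
      (Algebra.linearMap R (Localization.Away g)) ⟨g, Submonoid.mem_powers g⟩
    rw [Module.End.isUnit_iff] at this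
    exact this
  have h2 := Functor.map_smul (singleFunctor (ModuleCat.{u} R) 0) g
    (𝟙 (ModuleCat.of R (Localization.Away g)))
  rw [CategoryTheory.Functor.map_id] at h2
  unfold smod
  rw [← h2]
  infer_instance

end LG
end Part4

/-- Theorem: for a family `{f_j}` of elements of `R` and `g ∈ R`,
`Loc(R_g) ∩ Loc({R_{f_j}}) = Loc({R_{g·f_j}})` in `D(R)`. -/
theorem loc_localization_inter_loc_family (R : Type u) [CommRing R]
    [HasDerivedCategory.{w'} (ModuleCat.{u} R)]
    {ι : Type u} (f : ι → R) (g : R) :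
    Loc.{u} {smod R (ModuleCat.of R (Localization.Away g))} ∩
        Loc.{u} {x | ∃ j : ι,
          x = smod R (ModuleCat.of R (Localization.Away (f j)))} =
      Loc.{u} {x | ∃ j : ι,
        x = smod R (ModuleCat.of R (Localization.Away (g * f j)))} := by
  apply Set.Subset.antisymm
  · rintro X ⟨hX1, hX2⟩
    have h1 : IsIso (g • 𝟙 X) := loc_subset (local_isLocalizing R g)
      (by rintro _ rfl; exact smod_local g) hX1
    have hS := loc_isLocalizing.{u} {x | ∃ j : ι,
        x = smod R (ModuleCat.of R (Localization.Away (g * f j)))}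
    have hpre := preimage_isLocalizing (FG g).mapDerivedCategory
      (fun J => mapDer_preserves (J := J) (FG g)) hS
    have h2 := loc_subset hpre (by
      rintro _ ⟨j, rfl⟩
      obtain ⟨e⟩ := LG_single g (f j)
      exact hS.mem_of_iso e.symm (subset_loc _ ⟨j, rfl⟩)) hX2
    obtain ⟨e⟩ := iso_LG g X h1
    exact hS.mem_of_iso e.symm h2
  · apply Set.subset_inter
    · refine loc_subset (loc_isLocalizing _) ?_
      rintro _ ⟨j, rfl⟩
      obtain ⟨φ, hφ⟩ := exists_locMap g (f j) (g * f j) rfl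
      exact smod_loc_mem (loc_isLocalizing _) (f j) φ hφ (subset_loc _ rfl)
    · refine loc_subset (loc_isLocalizing _) ?_
      rintro _ ⟨j, rfl⟩
      obtain ⟨φ, hφ⟩ := exists_locMap (f j) g (g * f j) (mul_comm _ _)
      exact smod_loc_mem (loc_isLocalizing _) g φ hφ (subset_loc _ ⟨j, rfl⟩)
end

section
/- Let (T, ⊗, 1) be a tensor triangulated category having only a set of radical thick tensor ideals, and let Zar(T) denote the frame of radical thick tensor ideals of T. Then the assignment a ↦ √a is a support on T with values in Zar(T), and it is initial among supports: for every support d : obj(T) → F with values in a frame F, there is a unique frame homomorphism u : Zar(T) → F such that u(√a) = d(a) for all objects a of T. -/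
open CategoryTheory CategoryTheory.Limits CategoryTheory.Pretriangulated
open CategoryTheory.MonoidalCategory ZeroObject

universe w w2 v u

section TT

variable {T : Type u} [Category.{v} T] [Preadditive T] [HasZeroObject T]
  [HasShift T ℤ] [∀ n : ℤ, (shiftFunctor T n).Additive] [Pretriangulated T]
  [MonoidalCategory T] [SymmetricCategory T]
  [∀ X : T, (tensorLeft X).CommShift ℤ]
  [∀ X : T, (tensorLeft X).IsTriangulated]

/-- `tpow a n` is the `n`-fold tensor power `a ⊗ ⋯ ⊗ a` (with `tpow a 0 = 𝟙_ T`). -/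
def tpow (a : T) : ℕ → T
  | 0 => 𝟙_ T
  | n + 1 => tpow a n ⊗ a

/-- A thick tensor ideal of a tensor triangulated category, encoded as a set of
objects: a full triangulated subcategory (closed under isomorphisms, zero,
shifts and cones of distinguished triangles), closed under finite sums and
direct summands (retracts), and absorbing for the tensor product. -/
structure IsThickTensorIdeal (S : Set T) : Prop where
  zero_mem : (0 : T) ∈ S
  mem_of_iso : ∀ {x y : T}, (x ≅ y) → x ∈ S → y ∈ S
  shift_mem : ∀ (n : ℤ) {x : T}, x ∈ S → x⟦n⟧ ∈ S
  cone_mem : ∀ (Tr : Triangle T), Tr ∈ distinguishedTriangles →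
    Tr.obj₁ ∈ S → Tr.obj₂ ∈ S → Tr.obj₃ ∈ S
  sum_mem : ∀ {x y : T} (c : BinaryCofan x y), IsColimit c → x ∈ S → y ∈ S → c.pt ∈ S
  summand_mem : ∀ {x y : T} (i : x ⟶ y) (r : y ⟶ x), i ≫ r = 𝟙 x → y ∈ S → x ∈ S
  tensor_mem : ∀ {a : T}, a ∈ S → ∀ b : T, a ⊗ b ∈ S

/-- The smallest thick tensor ideal containing a set `S` of objects. -/
def ttIdealGen (S : Set T) : Set T :=
  ⋂₀ {I : Set T | IsThickTensorIdeal I ∧ S ⊆ I}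

/-- The radical `√S` of the thick tensor ideal generated by `S`: the objects
some positive tensor power of which lies in the thick tensor ideal generated
by `S`. -/
def ttRad (S : Set T) : Set T :=
  {a : T | ∃ n : ℕ, 1 ≤ n ∧ tpow a n ∈ ttIdealGen S}

/-- A radical thick tensor ideal. -/
def IsRadicalTTIdeal (S : Set T) : Prop :=
  IsThickTensorIdeal S ∧ ∀ (a : T) (n : ℕ), 1 ≤ n → tpow a n ∈ S → a ∈ S
/-- A support on a tensor triangulated category `T` with values in a frame `F`:
a map `d` on objects with `d(0) = ⊥`, `d(𝟙) = ⊤`, `d(Σa) = d(a)`,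
`d(a ⊕ b) = d(a) ∨ d(b)` (phrased via colimit binary cofans),
`d(a ⊗ b) = d(a) ∧ d(b)`, and `d(b) ≤ d(a) ∨ d(c)` for every distinguished
triangle `a → b → c → Σa`. -/
structure IsSupport {F : Type w2} [Order.Frame F] (d : T → F) : Prop where
  map_zero : ∀ x : T, IsZero x → d x = ⊥
  map_unit : d (𝟙_ T) = ⊤
  map_shift : ∀ x : T, d (x⟦(1 : ℤ)⟧) = d x
  map_sum : ∀ {x y : T} (c : BinaryCofan x y), IsColimit c → d c.pt = d x ⊔ d y
  map_tensor : ∀ x y : T, d (x ⊗ y) = d x ⊓ d y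
  map_triangle : ∀ Tr : Triangle T, Tr ∈ distinguishedTriangles →
    d Tr.obj₂ ≤ d Tr.obj₁ ⊔ d Tr.obj₃

set_option linter.unusedSectionVars false
set_option linter.unusedVariables false
lemma aux_ideal_sum {S : Set T}
    (iso : ∀ {x y : T}, (x ≅ y) → x ∈ S → y ∈ S)
    (ext2 : ∀ (Tr : Triangle T), Tr ∈ distinguishedTriangles →
      Tr.obj₁ ∈ S → Tr.obj₃ ∈ S → Tr.obj₂ ∈ S)
    {x y : T} (c : BinaryCofan x y) (hc : IsColimit c) (hx : x ∈ S) (hy : y ∈ S) : c.pt ∈ S := by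
  have h := ext2 _ (binaryBiproductTriangle_distinguished x y) hx hy
  exact iso ((BinaryBiproduct.isColimit x y).coconePointUniqueUpToIso hc) h

lemma aux_ext2 {S : Set T} (iso : ∀ {x y : T}, (x ≅ y) → x ∈ S → y ∈ S)
    (sh : ∀ (n : ℤ) {x : T}, x ∈ S → x⟦n⟧ ∈ S)
    (cone : ∀ (Tr : Triangle T), Tr ∈ distinguishedTriangles →
      Tr.obj₁ ∈ S → Tr.obj₂ ∈ S → Tr.obj₃ ∈ S)
    (Tr : Triangle T) (h : Tr ∈ distinguishedTriangles)
    (h1 : Tr.obj₁ ∈ S) (h3 : Tr.obj₃ ∈ S) : Tr.obj₂ ∈ S :=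
  cone _ (inv_rot_of_distTriang _ h) (sh (-1) h3) h1

lemma aux_retract {x y : T} (i : x ⟶ y) (r : y ⟶ x) (h : i ≫ r = 𝟙 x) :
    ∃ (z : T) (c : BinaryCofan x z), Nonempty (IsColimit c) ∧ c.pt = y := by
  obtain ⟨z, g, k, hT⟩ := distinguished_cocone_triangle i
  have hk : k = 0 := by
    have h1 : k ≫ i⟦(1:ℤ)⟧' = 0 := comp_distTriang_mor_zero₃₁ _ hT
    have h2 : (k ≫ i⟦(1:ℤ)⟧') ≫ r⟦(1:ℤ)⟧' = k := by
      rw [Category.assoc, ← Functor.map_comp, h, CategoryTheory.Functor.map_id, Category.comp_id]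
    rw [← h2, h1, zero_comp]
  obtain ⟨e, he⟩ : ∃ e : y ≅ x ⊞ z, i ≫ e.hom = biprod.inl := by
    obtain ⟨e, he⟩ := exists_iso_binaryBiproduct_of_distTriang _ hT hk
    exact ⟨e, he.1⟩
  have hi : biprod.inl ≫ e.inv = i := by rw [← he, Category.assoc, e.hom_inv_id, Category.comp_id]
  refine ⟨z, BinaryCofan.mk i (biprod.inr ≫ e.inv), ⟨?_⟩, rfl⟩
  refine BinaryCofan.IsColimit.mk _ (fun f g => e.hom ≫ biprod.desc f g) ?_ ?_ ?_
  · intro _ f g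
    change i ≫ e.hom ≫ biprod.desc f g = f
    rw [← Category.assoc, he, biprod.inl_desc]
  · intro _ f g
    change (biprod.inr ≫ e.inv) ≫ e.hom ≫ biprod.desc f g = g
    simp
  · intro _ f g (m : y ⟶ _) h1 h2
    change i ≫ m = f at h1
    change (biprod.inr ≫ e.inv) ≫ m = g at h2
    refine (cancel_epi e.inv).1 ?_
    apply biprod.hom_ext'
    · rw [← Category.assoc, hi, h1]; simp
    · rw [← Category.assoc, h2]; simp

lemma gen_ideal (S : Set T) : IsThickTensorIdeal (ttIdealGen S) where
  zero_mem I hI := hI.1.zero_mem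
  mem_of_iso e h I hI := hI.1.mem_of_iso e (h I hI)
  shift_mem n _ h I hI := hI.1.shift_mem n (h I hI)
  cone_mem Tr hT h1 h2 I hI := hI.1.cone_mem Tr hT (h1 I hI) (h2 I hI)
  sum_mem c hc h1 h2 I hI := hI.1.sum_mem c hc (h1 I hI) (h2 I hI)
  summand_mem i r h h1 I hI := hI.1.summand_mem i r h (h1 I hI)
  tensor_mem h b I hI := hI.1.tensor_mem (h I hI) b

lemma subset_gen (S : Set T) : S ⊆ ttIdealGen S := fun _ hx _ hI => hI.2 hx

lemma gen_le {S I : Set T} (hI : IsThickTensorIdeal I) (h : S ⊆ I) : ttIdealGen S ⊆ I :=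
  fun _ hx => hx I ⟨hI, h⟩

lemma ideal_tensor' {I : Set T} (hI : IsThickTensorIdeal I) {a : T} (h : a ∈ I) (b : T) :
    b ⊗ a ∈ I := hI.mem_of_iso (β_ a b) (hI.tensor_mem h b)

lemma colon_ideal {I : Set T} (hI : IsThickTensorIdeal I) (z : T) :
    IsThickTensorIdeal {x : T | z ⊗ x ∈ I} := by
  have iso : ∀ {x y : T}, (x ≅ y) → x ∈ {x : T | z ⊗ x ∈ I} → y ∈ {x : T | z ⊗ x ∈ I} :=
    fun e h => hI.mem_of_iso (whiskerLeftIso z e) h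
  have sh : ∀ (n : ℤ) {x : T}, x ∈ {x : T | z ⊗ x ∈ I} → x⟦n⟧ ∈ {x : T | z ⊗ x ∈ I} :=
    fun n x h => hI.mem_of_iso (((tensorLeft z).commShiftIso n).app x).symm (hI.shift_mem n h)
  have cone : ∀ (Tr : Triangle T), Tr ∈ distinguishedTriangles →
    Tr.obj₁ ∈ {x : T | z ⊗ x ∈ I} → Tr.obj₂ ∈ {x : T | z ⊗ x ∈ I} →
      Tr.obj₃ ∈ {x : T | z ⊗ x ∈ I} := fun Tr hT h1 h2 =>
    hI.cone_mem _ ((tensorLeft z).map_distinguished Tr hT) h1 h2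
  refine ⟨ideal_tensor' hI hI.zero_mem z, iso, sh, cone,
    aux_ideal_sum iso (aux_ext2 iso sh cone), ?_, ?_⟩
  · intro x y i r h hy
    exact hI.summand_mem (z ◁ i) (z ◁ r) (by rw [← whiskerLeft_comp, h, whiskerLeft_id]) hy
  · intro a h b
    exact hI.mem_of_iso (α_ z a b) (hI.tensor_mem h b)

lemma gen_tensor {S S' : Set T} {I : Set T} (hI : IsThickTensorIdeal I)
    (h : ∀ x ∈ S, ∀ y ∈ S', x ⊗ y ∈ I) {p q : T} (hp : p ∈ ttIdealGen S)
    (hq : q ∈ ttIdealGen S') : p ⊗ q ∈ I := by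
  have h1 : ∀ y ∈ S', p ⊗ y ∈ I := fun y hy =>
    hI.mem_of_iso (β_ y p) (gen_le (colon_ideal hI y)
      (fun x hx => hI.mem_of_iso (β_ x y) (h x hx y hy)) hp)
  exact gen_le (colon_ideal hI p) (fun y hy => h1 y hy) hq

lemma tpow_add_iso (a : T) (n m : ℕ) : Nonempty (tpow a (n + m) ≅ tpow a n ⊗ tpow a m) := by
  induction m with
  | zero => exact ⟨(ρ_ _).symm⟩
  | succ m ih =>
    obtain ⟨e⟩ := ih
    exact ⟨whiskerRightIso e a ≪≫ α_ _ _ _⟩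

lemma tpow_mul_iso (a : T) (n m : ℕ) : Nonempty (tpow (tpow a n) m ≅ tpow a (n * m)) := by
  induction m with
  | zero => exact ⟨Iso.refl _⟩
  | succ m ih =>
    obtain ⟨e⟩ := ih
    obtain ⟨f⟩ := tpow_add_iso a (n * m) n
    exact ⟨whiskerRightIso e (tpow a n) ≪≫ f.symm⟩

lemma pow_key {I : Set T} (hI : IsThickTensorIdeal I) {a b c : T} (hc : c ∈ ttIdealGen {a, b}) :
    ∀ (N n m : ℕ) (y : T), n + m = N → y ⊗ tpow a n ∈ I → y ⊗ tpow b m ∈ I →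
      y ⊗ tpow c N ∈ I := by
  intro N
  induction N with
  | zero =>
    intro n m y h h1 _
    obtain rfl : n = 0 := by omega
    exact h1
  | succ N ih =>
    intro n m y h h1 h2
    have sw : ∀ (p w : T), y ⊗ (p ⊗ w) ∈ I → (y ⊗ w) ⊗ p ∈ I := fun p w hh =>
      hI.mem_of_iso (whiskerLeftIso y (β_ p w) ≪≫ (α_ y w p).symm) hh
    have sw2 : ∀ (p w : T), (y ⊗ w) ⊗ p ∈ I → (y ⊗ p) ⊗ w ∈ I := fun p w hh =>
      hI.mem_of_iso ((α_ y w p) ≪≫ whiskerLeftIso y (β_ w p) ≪≫ (α_ y p w).symm) hh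
    have wk : ∀ (p w : T), y ⊗ p ∈ I → (y ⊗ w) ⊗ p ∈ I := fun p w hh =>
      sw2 w p (hI.tensor_mem hh w)
    have unit : y ⊗ 𝟙_ T ∈ I → ∀ w : T, y ⊗ w ∈ I := fun hh w =>
      hI.tensor_mem (hI.mem_of_iso (ρ_ y) hh) w
    rcases n with _ | n
    · exact unit h1 _
    rcases m with _ | m
    · exact unit h2 _
    have ha : (y ⊗ a) ⊗ tpow c N ∈ I := ih n (m + 1) _ (by omega) (sw _ _ h1) (wk _ _ h2)
    have hb : (y ⊗ b) ⊗ tpow c N ∈ I := ih (n + 1) m _ (by omega) (wk _ _ h1) (sw _ _ h2)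
    have := gen_le (colon_ideal hI (y ⊗ tpow c N)) (S := {a, b}) (by
      rintro x (rfl | rfl)
      · exact sw2 _ _ ha
      · exact sw2 _ _ hb) hc
    exact hI.mem_of_iso (α_ _ _ _) this

lemma rad_closed {S : Set T} {a b c : T} (ha : a ∈ ttRad S) (hb : b ∈ ttRad S)
    (hc : c ∈ ttIdealGen {a, b}) : c ∈ ttRad S := by
  obtain ⟨n, hn, ha⟩ := ha
  obtain ⟨m, hm, hb⟩ := hb
  have hI := gen_ideal S
  refine ⟨n + m, by omega, hI.mem_of_iso (λ_ _) (pow_key hI hc (n + m) n m (𝟙_ T) rfl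
    (ideal_tensor' hI ha _) (ideal_tensor' hI hb _))⟩

lemma subset_rad (S : Set T) : S ⊆ ttRad S := fun a ha =>
  ⟨1, le_rfl, (gen_ideal S).mem_of_iso (λ_ a).symm (subset_gen S ha)⟩

lemma rad_radical (S : Set T) : IsRadicalTTIdeal (ttRad S) := by
  have hl : ∀ a b : T, a ∈ ttIdealGen {a, b} := fun a b => subset_gen _ (by simp)
  have hr : ∀ a b : T, b ∈ ttIdealGen {a, b} := fun a b => subset_gen _ (by simp)
  refine ⟨⟨⟨1, le_rfl, ideal_tensor' (gen_ideal S) (gen_ideal S).zero_mem _⟩, ?_, ?_, ?_, ?_, ?_, ?_⟩, ?_⟩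
  · intro x y e h
    exact rad_closed h h ((gen_ideal _).mem_of_iso e (hl _ _))
  · intro n x h
    exact rad_closed h h ((gen_ideal _).shift_mem n (hl _ _))
  · intro Tr hT h1 h2
    exact rad_closed h1 h2 ((gen_ideal _).cone_mem Tr hT (hl _ _) (hr _ _))
  · intro x y c hc h1 h2
    exact rad_closed h1 h2 ((gen_ideal _).sum_mem c hc (hl _ _) (hr _ _))
  · intro x y i r h h1
    exact rad_closed h1 h1 ((gen_ideal _).summand_mem i r h (hl _ _))
  · intro a h b
    exact rad_closed h h ((gen_ideal _).tensor_mem (hl _ _) b)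
  · rintro a n hn ⟨m, hm, h⟩
    obtain ⟨e⟩ := tpow_mul_iso a n m
    exact ⟨n * m, Nat.mul_pos hn hm, (gen_ideal S).mem_of_iso e h⟩

lemma rad_le {S R : Set T} (hR : IsRadicalTTIdeal R) (h : S ⊆ R) : ttRad S ⊆ R := by
  rintro a ⟨n, hn, ha⟩
  exact hR.2 a n hn (gen_le hR.1 h ha)

lemma supp_radical {F : Type w2} [Order.Frame F] {d : T → F} (hd : IsSupport d) (t : F) :
    IsRadicalTTIdeal {x : T | d x ≤ t} := by
  have diso : ∀ {x y : T}, (x ≅ y) → d x = d y := by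
    intro x y e
    have := hd.map_sum (BinaryCofan.mk e.hom (0 : (0 : T) ⟶ y))
      (BinaryCofan.IsColimit.mk _ (fun f _ => e.inv ≫ f)
        (fun f g => e.hom_inv_id_assoc f)
        (fun f g => (isZero_zero T).eq_of_src _ _) (by
          intro _ f g m h1 h2
          rw [← h1]; exact (e.inv_hom_id_assoc m).symm))
    rw [hd.map_zero _ (isZero_zero T), sup_bot_eq] at this
    exact this.symm
  have dsh : ∀ (n : ℤ) (x : T), d (x⟦n⟧) = d x := by
    have h1 : ∀ (n : ℤ) (x : T), d (x⟦n + 1⟧) = d (x⟦n⟧) := fun n x => by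
      rw [diso ((shiftFunctorAdd T n 1).app x)]
      exact hd.map_shift _
    intro n x
    induction n with
    | zero => exact diso ((shiftFunctorZero T ℤ).app x)
    | succ n ih => rw [h1, ih]
    | pred n ih => rw [← ih, ← h1]; congr 3; omega
  have hpow : ∀ (a : T) (n : ℕ), d (tpow a (n + 1)) = d a := by
    intro a n
    induction n with
    | zero =>
      change d (𝟙_ T ⊗ a) = d a
      rw [hd.map_tensor, hd.map_unit, top_inf_eq]
    | succ n ih =>
      change d (tpow a (n + 1) ⊗ a) = d a
      rw [hd.map_tensor, ih, inf_idem]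
  refine ⟨⟨?_, ?_, ?_, ?_, ?_, ?_, ?_⟩, ?_⟩
  · simp [hd.map_zero _ (isZero_zero T)]
  · intro x y e h
    exact (diso e).symm.le.trans h
  · intro n x h
    exact (dsh n x).le.trans h
  · intro Tr hT h1 h2
    refine (hd.map_triangle _ (rot_of_distTriang _ hT)).trans (sup_le h2 ?_)
    exact (dsh 1 _).le.trans h1
  · intro x y c hc h1 h2
    exact (hd.map_sum c hc).le.trans (sup_le h1 h2)
  · intro x y i r h hy
    obtain ⟨z, c, ⟨hc⟩, rfl⟩ := aux_retract i r h
    exact (le_sup_left.trans (hd.map_sum c hc).ge).trans hy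
  · intro a h b
    exact (hd.map_tensor a b).le.trans (inf_le_left.trans h)
  · intro a n hn h
    obtain ⟨n, rfl⟩ : ∃ k, n = k + 1 := ⟨n - 1, by omega⟩
    exact (hpow a n).ge.trans h

/-- Theorem: in the Zariski frame of radical thick tensor ideals of `T` (where
the join of a family is the radical of the thick tensor ideal generated by its
union, binary meets are intersections, the bottom element is `√0` and the top
element is all of `T`), the assignment `a ↦ √a` satisfies the axioms of a
support, and it is initial among supports: for every support `d : T → F` with
values in a frame `F` there is a unique frame homomorphism `u` from the Zariski
frame to `F` with `u(√a) = d(a)` for all objects `a`. -/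
theorem ttRad_is_initial_support :
    -- `a ↦ √a` is a support with values in the Zariski frame:
    ((∀ x : T, IsZero x → ttRad {x} = ttRad {(0 : T)}) ∧
     ttRad {(𝟙_ T)} = Set.univ ∧
     (∀ x : T, ttRad {x⟦(1 : ℤ)⟧} = ttRad {x}) ∧
     (∀ (x y : T) (c : BinaryCofan x y), IsColimit c →
        ttRad {c.pt} = ttRad {x, y}) ∧
     (∀ x y : T, ttRad {x ⊗ y} = ttRad {x} ∩ ttRad {y}) ∧
     (∀ Tr : Triangle T, Tr ∈ distinguishedTriangles →
        ttRad {Tr.obj₂} ⊆ ttRad {Tr.obj₁, Tr.obj₃})) ∧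
    -- initiality among supports:
    (∀ (F : Type w2) [Order.Frame F] (d : T → F), IsSupport d →
      ∃ u : Set T → F,
        (∀ a : T, u (ttRad {a}) = d a) ∧
        -- `u` is a frame homomorphism on the radical thick tensor ideals:
        u Set.univ = ⊤ ∧
        (∀ I J : Set T, IsRadicalTTIdeal I → IsRadicalTTIdeal J →
          u (I ∩ J) = u I ⊓ u J) ∧
        (∀ 𝒮 : Set (Set T), (∀ I ∈ 𝒮, IsRadicalTTIdeal I) →
          u (ttRad (⋃₀ 𝒮)) = ⨆ I ∈ 𝒮, u I) ∧
        -- uniqueness: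
        (∀ u' : Set T → F, (∀ a : T, u' (ttRad {a}) = d a) →
          u' Set.univ = ⊤ →
          (∀ I J : Set T, IsRadicalTTIdeal I → IsRadicalTTIdeal J →
            u' (I ∩ J) = u' I ⊓ u' J) →
          (∀ 𝒮 : Set (Set T), (∀ I ∈ 𝒮, IsRadicalTTIdeal I) →
            u' (ttRad (⋃₀ 𝒮)) = ⨆ I ∈ 𝒮, u' I) →
          ∀ I : Set T, IsRadicalTTIdeal I → u' I = u I)) := by
  have selfm : ∀ x : T, x ∈ ttRad {x} := fun x => subset_rad _ (Set.mem_singleton x)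
  have memL : ∀ {x : T} {S : Set T}, x ∈ S → x ∈ ttRad S := fun h => subset_rad _ h
  have single : ∀ {x : T} {S : Set T}, x ∈ ttRad S → ttRad {x} ⊆ ttRad S := fun {x S} h =>
    rad_le (rad_radical S) (by simpa using h)
  have pair : ∀ {x y : T} {S : Set T}, x ∈ ttRad S → y ∈ ttRad S → ttRad {x, y} ⊆ ttRad S :=
    fun {x y S} h h' => rad_le (rad_radical S) (by rintro z (rfl | rfl) <;> assumption)
  refine ⟨⟨?_, ?_, ?_, ?_, ?_, ?_⟩, ?_⟩
  · intro x hx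
    exact (single ((rad_radical _).1.mem_of_iso ((isZero_zero T).iso hx) (selfm _))).antisymm
      (single (rad_radical _).1.zero_mem)
  · refine Set.eq_univ_of_forall fun x => ?_
    exact (rad_radical _).1.mem_of_iso (λ_ x) ((rad_radical _).1.tensor_mem (selfm _) x)
  · intro x
    refine (single ((rad_radical _).1.shift_mem 1 (selfm _))).antisymm (single ?_)
    exact (rad_radical _).1.mem_of_iso ((shiftFunctorCompIsoId T (1 : ℤ) (-1) (by simp)).app x)
      ((rad_radical _).1.shift_mem (-1) (selfm _))
  · intro x y c hc
    refine (single ((rad_radical _).1.sum_mem c hc (memL (by simp)) (memL (by simp)))).antisymm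
      (pair ?_ ?_)
    · exact (rad_radical _).1.summand_mem c.inl
        (hc.desc (BinaryCofan.mk (𝟙 x) 0)) (hc.fac _ ⟨WalkingPair.left⟩) (selfm _)
    · exact (rad_radical _).1.summand_mem c.inr
        (hc.desc (BinaryCofan.mk 0 (𝟙 y))) (hc.fac _ ⟨WalkingPair.right⟩) (selfm _)
  · intro x y
    refine Set.Subset.antisymm (Set.subset_inter ?_ ?_) ?_
    · exact single ((rad_radical _).1.tensor_mem (selfm _) y)
    · exact single (ideal_tensor' (rad_radical _).1 (selfm _) x)
    · rintro a ⟨⟨n, hn, h1⟩, ⟨m, hm, h2⟩⟩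
      obtain ⟨e⟩ := tpow_add_iso a n m
      refine ⟨n + m, by omega, (gen_ideal _).mem_of_iso e.symm
        (gen_tensor (gen_ideal _) ?_ h1 h2)⟩
      rintro _ rfl _ rfl
      exact subset_gen _ rfl
  · intro Tr hT
    have hI := (rad_radical ({Tr.obj₁, Tr.obj₃} : Set T)).1
    exact single (aux_ext2 hI.mem_of_iso hI.shift_mem hI.cone_mem Tr hT
      (memL (by simp)) (memL (by simp)))
  · intro F _ d hd
    refine ⟨fun I => ⨆ a ∈ I, d a, ?_, ?_, ?_, ?_, ?_⟩
    · intro a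
      apply le_antisymm
      · exact iSup₂_le (rad_le (supp_radical hd (d a)) (Set.singleton_subset_iff.2 (le_refl (d a))))
      · exact le_iSup₂_of_le a (selfm _) le_rfl
    · exact top_le_iff.1 (hd.map_unit.ge.trans (le_iSup₂_of_le (𝟙_ T) (Set.mem_univ _) le_rfl))
    · intro I J hI hJ
      apply le_antisymm
      · exact iSup₂_le fun a ha => le_inf (le_iSup₂_of_le a ha.1 le_rfl)
          (le_iSup₂_of_le a ha.2 le_rfl)
      · dsimp only
        rw [iSup₂_inf_eq]
        refine iSup₂_le fun a ha => ?_
        rw [inf_iSup₂_eq]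
        refine iSup₂_le fun b hb => ?_
        rw [← hd.map_tensor]
        exact le_iSup₂_of_le (a ⊗ b) ⟨hI.1.tensor_mem ha b, ideal_tensor' hJ.1 hb a⟩ le_rfl
    · intro 𝒮 h𝒮
      apply le_antisymm
      · refine iSup₂_le (rad_le (supp_radical hd _) ?_)
        rintro a ⟨I, hI, ha⟩
        exact le_iSup₂_of_le I hI (le_iSup₂_of_le a ha le_rfl)
      · refine iSup₂_le fun I hI => iSup₂_le fun a ha => ?_
        exact le_iSup₂_of_le a (memL ⟨I, hI, ha⟩) le_rfl
    · intro u' h1 _ _ h4 I hI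
      have h := h4 ((fun a => ttRad {a}) '' I) (by
        rintro _ ⟨a, _, rfl⟩
        exact rad_radical _)
      have hIe : ttRad (⋃₀ ((fun a => ttRad {a}) '' I)) = I := by
        apply Set.Subset.antisymm
        · apply rad_le hI
          rintro b ⟨_, ⟨a, ha, rfl⟩, hb⟩
          exact rad_le hI (by simpa using ha) hb
        · intro a ha
          exact memL ⟨_, ⟨a, ha, rfl⟩, selfm _⟩
      rw [hIe, iSup_image] at h
      simpa only [h1] using h

end TT
end
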